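/- Let G be a finite group and p a prime divisor of |G| such that gcd(|G|, (p−1)(p²−1)⋯(pⁿ−1)) = 1 for some integer n ≥ 1. Let P be a Sylow p-subgroup of G, and suppose that every n-maximal subgroup of P (if any exists) has a p-nilpotent supplement in G. Then G is p-nilpotent. -/

import Mathlib

open scoped Pointwise

universe u

/-- `M` is a maximal subgroup of `K` (within the subgroup lattice of the ambient group). -/
def IsMaximalIn {G : Type*} [Group G] (M K : Subgroup G) : Prop :=
  M < K ∧ ∀ L : Subgroup G, M < L → L ≤ K → L = K

/-- `P` is a Sylow `p`-subgroup of the subgroup `E`. -/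
def IsSylowIn {G : Type*} [Group G] (p : ℕ) (P E : Subgroup G) : Prop :=
  P ≤ E ∧ IsPGroup p P ∧ ¬ p ∣ (P.subgroupOf E).index

/-- `H` is s-permutable in `G`: it permutes with every Sylow subgroup of `G`. -/
def SPermutable {G : Type*} [Group G] (H : Subgroup G) : Prop :=
  ∀ q : ℕ, q.Prime → ∀ Q : Subgroup G, IsSylowIn q Q ⊤ →
    (H : Set G) * (Q : Set G) = (Q : Set G) * (H : Set G)

/-- `A/B` is a chief factor of the ambient group. -/
def IsChiefFactor {G : Type*} [Group G] (A B : Subgroup G) : Prop :=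
  A.Normal ∧ B.Normal ∧ B < A ∧ ∀ L : Subgroup G, L.Normal → B < L → L < A → False

/-- The 𝔘-hypercenter: the product of all normal subgroups `N` such that every chief
factor `A/B` with `A ≤ N` has prime order. -/
def UHypercenter (G : Type*) [Group G] : Subgroup G :=
  sSup {N : Subgroup G | N.Normal ∧
    ∀ A B : Subgroup G, IsChiefFactor A B → A ≤ N → (B.relIndex A).Prime}

/-- The 𝔖-hypercenter: the product of all normal subgroups `N` such that every chief
factor `A/B` with `A ≤ N` is abelian with `G/C_G(A/B)` soluble. -/
def SHypercenter (G : Type*) [Group G] : Subgroup G :=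
  sSup {N : Subgroup G | N.Normal ∧
    ∀ A B : Subgroup G, IsChiefFactor A B → A ≤ N →
      (∀ a ∈ A, ∀ b ∈ A, a * b * a⁻¹ * b⁻¹ ∈ B) ∧
      ∃ C : Subgroup G, ∃ _ : C.Normal,
        (∀ g : G, g ∈ C ↔ ∀ h ∈ A, g * h * g⁻¹ * h⁻¹ ∈ B) ∧ IsSolvable (G ⧸ C)}

/-- `H` is 𝔘ₛ-quasinormal in `G`. -/
def UsQuasinormal {G : Type*} [Group G] (H : Subgroup G) : Prop :=
  ∃ T : Subgroup G, T.Normal ∧ SPermutable (H ⊔ T) ∧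
    ∀ x ∈ H ⊓ T,
      (QuotientGroup.mk x : G ⧸ H.normalCore) ∈ UHypercenter (G ⧸ H.normalCore)

/-- `H` is 𝔖ₛ-quasinormal in `G`. -/
def SsQuasinormal {G : Type*} [Group G] (H : Subgroup G) : Prop :=
  ∃ T : Subgroup G, T.Normal ∧ SPermutable (H ⊔ T) ∧
    ∀ x ∈ H ⊓ T,
      (QuotientGroup.mk x : G ⧸ H.normalCore) ∈ SHypercenter (G ⧸ H.normalCore)

/-- A group is supersoluble if it has a chain of subgroups, each normal in the whole
group, reaching from `⊥` to `⊤`, with all successive factors cyclic. -/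
def IsSupersoluble (G : Type*) [Group G] : Prop :=
  ∃ (k : ℕ) (c : Fin (k + 1) → Subgroup G),
    c 0 = ⊥ ∧ c (Fin.last k) = ⊤ ∧ (∀ i, (c i).Normal) ∧
    (∀ i : Fin k, c i.castSucc ≤ c i.succ) ∧
    ∀ i : Fin k, ∃ g ∈ c i.succ, ∀ x ∈ c i.succ, ∃ m : ℤ, x⁻¹ * g ^ m ∈ c i.castSucc

/-- `A` is subnormal in `G`. -/
def IsSubnormal {G : Type*} [Group G] (A : Subgroup G) : Prop :=
  ∃ (n : ℕ) (c : Fin (n + 1) → Subgroup G), c 0 = A ∧ c (Fin.last n) = ⊤ ∧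
    ∀ i : Fin n, c i.castSucc ≤ c i.succ ∧
      ∀ x ∈ c i.succ, ∀ a ∈ c i.castSucc, x * a * x⁻¹ ∈ c i.castSucc

/-- `H` has a supersoluble supplement in the ambient group. -/
def HasSupersolubleSupplement {G : Type*} [Group G] (H : Subgroup G) : Prop :=
  ∃ T : Subgroup G, IsSupersoluble T ∧ (H : Set G) * (T : Set G) = Set.univ

/-- A group is `p`-nilpotent if it has a normal subgroup of order prime to `p`
and of `p`-power index (a normal `p`-complement). -/
def IsPNilpotent (p : ℕ) (G : Type*) [Group G] : Prop :=
  ∃ N : Subgroup G, N.Normal ∧ Nat.Coprime (Nat.card N) p ∧ ∃ k : ℕ, N.index = p ^ k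

/-- `H` has a `p`-nilpotent supplement in the ambient group. -/
def HasPNilpotentSupplement {G : Type*} [Group G] (p : ℕ) (H : Subgroup G) : Prop :=
  ∃ T : Subgroup G, IsPNilpotent p T ∧ (H : Set G) * (T : Set G) = Set.univ

/-- `H` is an `n`-maximal subgroup of `P`: there is a chain
`H = Hₙ < ⋯ < H₁ < H₀ = P` with each term maximal in the preceding one. -/
def IsNMaximalIn {G : Type*} [Group G] (n : ℕ) (H P : Subgroup G) : Prop :=
  ∃ c : Fin (n + 1) → Subgroup G, c 0 = P ∧ c (Fin.last n) = H ∧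
    ∀ i : Fin n, IsMaximalIn (c i.succ) (c i.castSucc)

/-- A group is quasinilpotent if every element induces an inner automorphism
on every chief factor. -/
def IsQuasinilpotentGroup (G : Type*) [Group G] : Prop :=
  ∀ A B : Subgroup G, IsChiefFactor A B →
    ∀ x : G, ∃ y ∈ A, ∀ h ∈ A, (x * h * x⁻¹) * (y * h * y⁻¹)⁻¹ ∈ B

/-- The generalized Fitting subgroup: the product of all normal quasinilpotent
subgroups. -/
def generalizedFitting (G : Type*) [Group G] : Subgroup G :=
  sSup {N : Subgroup G | N.Normal ∧ IsQuasinilpotentGroup N}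

/-- The generalized Fitting subgroup of a subgroup `H`, as a subgroup of `G`. -/
def FStarIn {G : Type*} [Group G] (H : Subgroup G) : Subgroup G :=
  (generalizedFitting H).map H.subtype

/-- The Fitting subgroup: the product of all nilpotent normal subgroups. -/
def fittingSubgroup (G : Type*) [Group G] : Subgroup G :=
  sSup {N : Subgroup G | N.Normal ∧ Group.IsNilpotent N}

/-- The Fitting subgroup of a subgroup `H`, as a subgroup of `G`. -/
def FittingIn {G : Type*} [Group G] (H : Subgroup G) : Subgroup G :=
  (fittingSubgroup H).map H.subtype

theorem pn_mem_iff {G : Type*} [Group G] [Finite G] {p : ℕ} {K : Subgroup G}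
    (hK : K.Normal) (hc : Nat.Coprime (Nat.card K) p) {k : ℕ} (hi : K.index = p ^ k) (x : G) :
    x ∈ K ↔ Nat.Coprime (orderOf x) p := by
  constructor
  · intro hx
    have h : orderOf x ∣ Nat.card K := Subgroup.orderOf_dvd_natCard K hx
    exact Nat.Coprime.coprime_dvd_left h hc
  · intro hx
    have h1 : x ^ (p ^ k) ∈ K := by rw [← hi]; exact K.pow_index_mem x
    have h2 : Nat.Coprime (orderOf x) (p ^ k) := Nat.Coprime.pow_right k hx
    obtain ⟨m, hm⟩ := exists_pow_eq_self_of_coprime h2.symm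
    rw [← hm]
    exact K.pow_mem h1 m

/-- A group with a normal `p`-nilpotent subgroup of `p`-power index is `p`-nilpotent. -/
theorem pn_of_normal {G : Type*} [Group G] [Finite G] {p : ℕ} {N : Subgroup G}
    (hN : N.Normal) {k : ℕ} (hi : N.index = p ^ k) (h : IsPNilpotent p N) : IsPNilpotent p G := by
  obtain ⟨K, hK, hc, l, hl⟩ := h
  refine ⟨K.map N.subtype, ⟨?_⟩, ?_, l + k, ?_⟩
  · rintro _ ⟨x, hx, rfl⟩ g
    have hgN : g * (x : G) * g⁻¹ ∈ N := hN.conj_mem _ x.2 g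
    refine ⟨⟨_, hgN⟩, ?_, rfl⟩
    have hx' := (pn_mem_iff hK hc hl x).1 hx
    refine (pn_mem_iff hK hc hl _).2 ?_
    rw [← Subgroup.orderOf_coe] at hx' ⊢
    have : orderOf (g * (x : G) * g⁻¹) = orderOf (x : G) := by
      have := orderOf_injective (MulAut.conj g).toMonoidHom (MulAut.conj g).injective (x : G)
      simpa using this
    simpa [this] using hx'
  · rw [Subgroup.card_subtype]; exact hc
  · rw [Subgroup.index_map_subtype, hl, hi, pow_add]

theorem pn_sylow_card {G : Type*} [Group G] [Finite G] {p : ℕ} [Fact p.Prime] {K P : Subgroup G}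
    (hc : Nat.Coprime (Nat.card K) p) {k : ℕ} (hi : K.index = p ^ k)
    (hP : IsPGroup p P) (hPi : ¬ p ∣ P.index) : K.IsComplement' P := by
  obtain ⟨m, hm⟩ := IsPGroup.iff_card.1 hP
  have hp : p.Prime := Fact.out
  have h1 := K.card_mul_index
  have h2 := P.card_mul_index
  have h3 : Nat.Coprime P.index p := ((Nat.Prime.coprime_iff_not_dvd hp).2 hPi).symm
  rw [hi] at h1
  rw [hm] at h2
  have h5 : p ^ k = p ^ m := by
    apply Nat.dvd_antisymm
    · apply Nat.Coprime.dvd_of_dvd_mul_right (n := P.index)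
      · exact (Nat.Coprime.pow_right k h3).symm
      · rw [h2, ← h1]; exact Dvd.intro_left _ rfl
    · apply Nat.Coprime.dvd_of_dvd_mul_left (m := Nat.card K)
      · exact (Nat.Coprime.pow_right m hc).symm
      · rw [h1, ← h2]; exact Dvd.intro _ rfl
  apply Subgroup.isComplement'_of_coprime
  · rw [hm, ← h5, h1]
  · rw [hm]; exact Nat.Coprime.pow_right _ hc

theorem pn_decomp {G : Type*} [Group G] [Finite G] {p : ℕ} [Fact p.Prime] {K P : Subgroup G}
    (hc : Nat.Coprime (Nat.card K) p) {k : ℕ} (hi : K.index = p ^ k)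
    (hP : IsPGroup p P) (hPi : ¬ p ∣ P.index) (g : G) : ∃ a ∈ K, ∃ b ∈ P, a * b = g := by
  have h := pn_sylow_card hc hi hP hPi
  obtain ⟨⟨a, b⟩, hab⟩ := h.2 g
  exact ⟨a, a.2, b, b.2, hab⟩

theorem pn_disj {G : Type*} [Group G] [Finite G] {p : ℕ} {K P : Subgroup G}
    (hc : Nat.Coprime (Nat.card K) p)
    (hP : IsPGroup p P) : Disjoint K P := by
  rw [Subgroup.disjoint_def]
  intro x hx hy
  have h1 := Nat.Coprime.coprime_dvd_left (Subgroup.orderOf_dvd_natCard K hx) hc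
  obtain ⟨k, hk⟩ := hP ⟨x, hy⟩
  have h2 : x ^ p ^ k = 1 := by simpa [Subtype.ext_iff] using hk
  have h3 := orderOf_dvd_of_pow_eq_one h2
  rw [← orderOf_eq_one_iff]
  exact Nat.Coprime.eq_one_of_dvd (Nat.Coprime.pow_right k h1) h3

/-- A proper subgroup of a `p`-subgroup is proper in its normalizer. -/
theorem lt_normalizer_inf {G : Type*} [Group G] [Finite G] {p : ℕ} [Fact p.Prime]
    {D P : Subgroup G} (hP : IsPGroup p P) (h : D < P) :
    D < Subgroup.normalizer (D : Set G) ⊓ P := by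
  have hnil : Group.IsNilpotent P := hP.isNilpotent
  have hnc := Group.normalizerCondition_of_isNilpotent (G := P)
  have h1 : D.subgroupOf P < ⊤ := by
    rw [lt_top_iff_ne_top, Ne, Subgroup.subgroupOf_eq_top]
    exact not_le_of_gt h
  have h2 := hnc _ h1
  obtain ⟨x, hx, hxD⟩ := SetLike.exists_of_lt h2
  refine lt_of_le_of_ne (le_inf Subgroup.le_normalizer h.le) ?_
  intro heq
  apply hxD
  rw [Subgroup.mem_subgroupOf, heq]
  refine ⟨?_, x.2⟩
  change (x : G) ∈ Subgroup.normalizer (D : Set G)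
  rw [Subgroup.mem_normalizer_iff]
  rw [Subgroup.mem_normalizer_iff] at hx
  intro y
  constructor
  · intro hy
    exact (hx ⟨y, h.le hy⟩).1 hy
  · intro hy
    have hyP : y ∈ P := by
      have := P.mul_mem (P.mul_mem (P.inv_mem x.2) (h.le hy)) x.2
      simpa [mul_assoc] using this
    exact (hx ⟨y, hyP⟩).2 hy

theorem fusion_aux {G : Type*} [Group G] [Finite G] {p : ℕ} [Fact p.Prime]
    (hN : ∀ U : Subgroup G, IsPGroup p U → U ≠ ⊥ →
      IsPNilpotent p (Subgroup.normalizer (U : Set G))) :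
    ∀ (d : ℕ) (S P : Sylow p G), Nat.card G - Nat.card (S ⊓ P : Subgroup G) = d →
      ∃ c : G, (∀ x ∈ (S ⊓ P : Subgroup G), c * x = x * c) ∧ c • S = P := by
  intro d
  induction d using Nat.strong_induction_on with
  | _ d ih =>
  intro S P hd
  set D : Subgroup G := S ⊓ P with hD
  by_cases hSP : S = P
  · exact ⟨1, by simp, by simp [hSP]⟩
  by_cases hDb : D = ⊥
  · obtain ⟨c, hc⟩ := MulAction.exists_smul_eq G S P
    refine ⟨c, ?_, hc⟩
    rw [hDb]
    intro x hx
    rw [Subgroup.mem_bot] at hx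
    simp [hx]
  have hDp : IsPGroup p D := S.2.to_le inf_le_left
  have hDS : D < S := by
    refine lt_of_le_of_ne inf_le_left ?_
    intro h
    have : (S : Subgroup G) ≤ P := by rw [← h]; exact inf_le_right
    apply hSP
    exact (Sylow.ext (S.3 P.2 this)).symm
  have hDP : D < P := by
    refine lt_of_le_of_ne inf_le_right ?_
    intro h
    have : (P : Subgroup G) ≤ S := by rw [← h]; exact inf_le_left
    apply hSP
    exact (Sylow.ext (P.3 S.2 this))
  have hS' := lt_normalizer_inf S.2 hDS
  have hP' := lt_normalizer_inf P.2 hDP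
  have hND := hN D hDp hDb
  set N := Subgroup.normalizer (D : Set G) with hNdef
  obtain ⟨K, hK, hKc, k, hk⟩ := hND
  have hstep : ∀ (A B : Sylow p G), D < (A ⊓ B : Subgroup G) →
      ∃ c : G, (∀ x ∈ D, c * x = x * c) ∧ c • A = B := by
    intro A B hAB
    have hlt : Nat.card D < Nat.card (A ⊓ B : Subgroup G) := by
      have := Set.ncard_lt_ncard (SetLike.coe_ssubset_coe.2 hAB) (Set.toFinite _)
      rwa [← Nat.card_coe_set_eq, ← Nat.card_coe_set_eq] at this
    have hle : Nat.card (A ⊓ B : Subgroup G) ≤ Nat.card G := Subgroup.card_le_card_group _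
    obtain ⟨c, hc, hc'⟩ := ih _ (by omega) A B rfl
    exact ⟨c, fun x hx => hc x (hAB.le hx), hc'⟩
  have hpS : IsPGroup p ((N ⊓ S : Subgroup G).subgroupOf N) :=
    (S.2.to_le inf_le_right).comap_of_injective _ N.subtype_injective
  have hpP : IsPGroup p ((N ⊓ P : Subgroup G).subgroupOf N) :=
    (P.2.to_le inf_le_right).comap_of_injective _ N.subtype_injective
  obtain ⟨S1, hS1⟩ := hpS.exists_le_sylow
  obtain ⟨P1, hP1⟩ := hpP.exists_le_sylow
  obtain ⟨g, hg⟩ := MulAction.exists_smul_eq N P1 S1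
  obtain ⟨a, haK, b, hb, rfl⟩ := pn_decomp hKc hk P1.2 P1.not_dvd_index g
  have hbP : b • P1 = P1 := Sylow.smul_eq_iff_mem_normalizer.2 (Subgroup.le_normalizer hb)
  rw [mul_smul, hbP] at hg
  obtain ⟨R, hR⟩ := (P1.2.map N.subtype).exists_le_sylow
  obtain ⟨c1, hc1, hc1'⟩ := hstep R P (lt_of_lt_of_le hP' (by
    refine le_inf ?_ inf_le_right
    intro x hx
    exact hR ⟨⟨x, hx.1⟩, hP1 hx, rfl⟩))
  obtain ⟨c2, hc2, hc2'⟩ := hstep S ((a : G) • R) (lt_of_lt_of_le hS' (by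
    refine le_inf inf_le_right ?_
    intro x hx
    have hx1 : (⟨x, hx.1⟩ : N) ∈ S1 := hS1 hx
    rw [← hg] at hx1
    obtain ⟨y, hy, hyx⟩ := hx1
    refine ⟨y, hR ⟨y, hy, rfl⟩, ?_⟩
    have := congrArg (Subtype.val) hyx
    exact this))
  have haD : ∀ x ∈ D, (a : G) * x = x * a := by
    intro x hx
    have hdis : Disjoint K (D.subgroupOf N) :=
      pn_disj hKc (hDp.comap_of_injective _ N.subtype_injective)
    have := Subgroup.commute_of_normal_of_disjoint K (D.subgroupOf N) hK inferInstance hdis a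
      ⟨x, Subgroup.le_normalizer hx⟩ haK hx
    exact congrArg Subtype.val this.eq
  refine ⟨c1 * (a : G)⁻¹ * c2, ?_, ?_⟩
  · intro x hx
    have e1 : Commute c1 x := hc1 x hx
    have e2 : Commute (a : G) x := haD x hx
    have e3 : Commute c2 x := hc2 x hx
    exact (e1.mul_left e2.inv_left).mul_left e3
  · rw [mul_smul, mul_smul, hc2', inv_smul_smul, hc1']

open scoped commutatorElement in
theorem focal_ne_top {G : Type*} [Group G] [Finite G] {p : ℕ} [Fact p.Prime]
    (hN : ∀ U : Subgroup G, IsPGroup p U → U ≠ ⊥ →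
      IsPNilpotent p (Subgroup.normalizer (U : Set G)))
    (P : Sylow p G) (hP : (P : Subgroup G) ≠ ⊥) :
    (P : Subgroup G).focalSubgroupOf ≠ ⊤ := by
  have hnil : Group.IsNilpotent P := P.2.isNilpotent
  have hnt : Nontrivial P := (Subgroup.nontrivial_iff_ne_bot _).2 hP
  have hcom : commutator P ≠ ⊤ := by
    have : Group.IsSolvable P := inferInstance
    exact (Group.IsSolvable.commutator_lt_top_of_nontrivial P).ne
  intro htop
  apply hcom
  rw [eq_top_iff, ← htop, Subgroup.focalSubgroupOf_eq_closure, Subgroup.closure_le]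
  rintro ⟨y, hy⟩ ⟨x, hx, u, hu⟩
  simp only at hu
  -- conjugate element
  have hx' : u * x⁻¹ * u⁻¹ ∈ P := by
    have : u * x⁻¹ * u⁻¹ = x⁻¹ * y := by rw [hu, commutatorElement_def]; group
    rw [this]
    exact mul_mem (inv_mem hx) hy
  obtain ⟨c, hc, hc'⟩ := fusion_aux hN _ (u • P) P rfl
  have hcx := hc (u * x⁻¹ * u⁻¹) ⟨⟨x⁻¹, inv_mem hx, rfl⟩, hx'⟩
  have hnorm : c * u ∈ Subgroup.normalizer ((P : Subgroup G) : Set G) := by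
    rw [← mul_smul] at hc'
    exact Sylow.smul_eq_iff_mem_normalizer.1 hc'
  obtain ⟨K, hK, hKc, k, hk⟩ := hN P P.2 hP
  have hPle : (P : Subgroup G) ≤ Subgroup.normalizer ((P : Subgroup G) : Set G) :=
    Subgroup.le_normalizer
  obtain ⟨a, haK, b, hb, hab⟩ := pn_decomp hKc hk (P.subtype hPle).2
    (P.subtype hPle).not_dvd_index ⟨c * u, hnorm⟩
  have hbP : (b : G) ∈ P := hb
  have hab' : (a : G) * b = c * u := congrArg Subtype.val hab
  have hcomm : ∀ z ∈ P, (a : G) * z = z * a := by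
    intro z hz
    have hdis : Disjoint K (P.subtype hPle) := pn_disj hKc (P.subtype hPle).2
    have := Subgroup.commute_of_normal_of_disjoint K _ hK
      (by rw [Sylow.coe_subtype]; infer_instance) hdis a
      ⟨z, hPle hz⟩ haK hz
    exact congrArg Subtype.val this.eq
  have e1 : u * x⁻¹ * u⁻¹ = (b : G) * x⁻¹ * (b : G)⁻¹ := by
    have h2 := hcomm (b * x⁻¹ * (b : G)⁻¹) (mul_mem (mul_mem hbP (inv_mem hx)) (inv_mem hbP))
    calc u * x⁻¹ * u⁻¹ = c⁻¹ * (c * (u * x⁻¹ * u⁻¹)) := by group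
      _ = c⁻¹ * ((u * x⁻¹ * u⁻¹) * c) := by rw [hcx]
      _ = u * x⁻¹ * u⁻¹ := by rw [← hcx]; group
      _ = (c * (u * x⁻¹ * u⁻¹)) * c⁻¹ := by rw [hcx]; group
      _ = (c * u) * x⁻¹ * (c * u)⁻¹ := by group
      _ = (a * (b * x⁻¹ * (b : G)⁻¹)) * (a : G)⁻¹ := by rw [← hab']; group
      _ = _ := by rw [h2]; group
  have e2 : (⟨y, hy⟩ : (P : Subgroup G)) = ⁅(⟨x, hx⟩ : (P : Subgroup G)), ⟨b, hbP⟩⁆ := by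
    apply Subtype.ext
    change y = x * b * x⁻¹ * (b : G)⁻¹
    rw [hu, commutatorElement_def]
    calc x * u * x⁻¹ * u⁻¹ = x * (u * x⁻¹ * u⁻¹) := by group
      _ = _ := by rw [e1]; group
  rw [e2]
  exact Subgroup.commutator_mem_commutator (Subgroup.mem_top _) (Subgroup.mem_top _)

theorem exists_normal_of_fusion {G : Type*} [Group G] [Finite G] {p : ℕ} [Fact p.Prime]
    (hN : ∀ U : Subgroup G, IsPGroup p U → U ≠ ⊥ →
      IsPNilpotent p (Subgroup.normalizer (U : Set G)))
    (P : Sylow p G) (hP : (P : Subgroup G) ≠ ⊥) :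
    ∃ M : Subgroup G, M.Normal ∧ M ≠ ⊤ ∧ ∃ k, M.index = p ^ k := by
  have hf := focal_ne_top hN P hP
  refine ⟨(Subgroup.transferFocal (P : Subgroup G)).ker, inferInstance, ?_, ?_⟩
  · intro htop
    apply hf
    rw [eq_top_iff]
    intro x _
    have h1 := Subgroup.transferFocal_eq_pow (P : Subgroup G) x
    have h2 : Subgroup.transferFocal (P : Subgroup G) (x : G) = 1 := by
      rw [← MonoidHom.mem_ker, htop]; trivial
    rw [h2] at h1
    rw [← QuotientGroup.eq_one_iff]
    obtain ⟨m, hm⟩ := P.2 x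
    have h3 : (x : P ⧸ (P : Subgroup G).focalSubgroupOf) ^ (p ^ m) = 1 := by
      rw [← QuotientGroup.mk_pow, hm]; rfl
    have hcop : Nat.Coprime (P : Subgroup G).index (p ^ m) := by
      apply Nat.Coprime.pow_right
      exact ((Nat.Prime.coprime_iff_not_dvd Fact.out).2 P.not_dvd_index).symm
    rw [← orderOf_eq_one_iff]
    exact Nat.eq_one_of_dvd_coprimes hcop (orderOf_dvd_of_pow_eq_one h1.symm)
      (orderOf_dvd_of_pow_eq_one h3)
  · rw [Subgroup.index_ker]
    exact IsPGroup.iff_card.1 ((P.2.to_quotient _).to_subgroup _)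

/-- Case of a normal Sylow subgroup. -/
theorem pn_normal_sylow {G : Type*} [Group G] [Finite G] {p n : ℕ} [Fact p.Prime]
    (hcop : Nat.Coprime (Nat.card G) (∏ i ∈ Finset.Icc 1 n, (p ^ i - 1)))
    (hsm : ¬ p ^ (n + 1) ∣ Nat.card G) (U : Subgroup G) (hU : U.Normal) (hUp : IsPGroup p U)
    (hUi : Nat.Coprime U.index p) : IsPNilpotent p G := by
  have hp : p.Prime := Fact.out
  obtain ⟨m, hm⟩ := IsPGroup.iff_card.1 hUp
  have hmn : m ≤ n := by
    by_contra hlt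
    apply hsm
    exact (pow_dvd_pow p (by omega)).trans (hm ▸ U.card_subgroup_dvd_card)
  have hcp : Nat.Coprime (Nat.card U) U.index := by
    rw [hm]; exact Nat.Coprime.pow_left _ hUi.symm
  obtain ⟨K, hK⟩ := Subgroup.exists_right_complement'_of_coprime hcp
  have hKc : Nat.card K = U.index := hK.symm.index_eq_card.symm
  have hKi : K.index = Nat.card U := hK.index_eq_card
  have hcent : ∀ q : ℕ, q.Prime → q ≠ p → ∀ Q : Sylow q G,
      (Q : Subgroup G) ≤ Subgroup.centralizer (U : Set G) := by
    intro q hq hqp Q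
    have : Fact q.Prime := ⟨hq⟩
    by_cases hqG : q ∣ Nat.card G
    swap
    · have : (Q : Subgroup G) = ⊥ := by
        rw [← Subgroup.card_eq_one, Q.card_eq_multiplicity, 
          Nat.factorization_eq_zero_of_not_dvd hqG, pow_zero]
      rw [this]; exact bot_le
    let C : Subgroup U := (Subgroup.centralizer ((Q : Subgroup G) : Set G)).subgroupOf U
    let act : MulAction Q U := MulAction.compHom U
      ((MulAut.conjNormal (H := U)).comp (Q : Subgroup G).subtype)
    have hfix : MulAction.fixedPoints Q U = (C : Set U) := by
      ext x
      rw [MulAction.mem_fixedPoints]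
      change _ ↔ (x : G) ∈ Subgroup.centralizer ((Q : Subgroup G) : Set G)
      rw [Subgroup.mem_centralizer_iff]
      constructor
      · intro h y hy
        have := congrArg Subtype.val (h ⟨y, hy⟩)
        have h' : y * (x : G) * y⁻¹ = x := this
        rw [← mul_inv_eq_iff_eq_mul]; exact h'
      · intro h y
        apply Subtype.ext
        change (y : G) * (x : G) * (y : G)⁻¹ = x
        rw [mul_inv_eq_iff_eq_mul]; exact h y y.2
    have hmod := Q.2.card_modEq_card_fixedPoints U
    rw [hfix] at hmod
    obtain ⟨c, hc⟩ := IsPGroup.iff_card.1 (hUp.to_subgroup C)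
    have hc' : Nat.card (C : Set U) = p ^ c := hc
    rw [hm, hc'] at hmod
    have hcm : c ≤ m := by
      have := Nat.le_of_dvd Nat.card_pos C.card_subgroup_dvd_card
      rw [hc, hm] at this
      exact (Nat.pow_le_pow_iff_right hp.one_lt).1 this
    have hCtop : C = ⊤ := by
      apply Subgroup.eq_top_of_card_eq
      rw [hc, hm]
      by_contra hne
      have hlt : c < m := lt_of_le_of_ne hcm (fun h => hne (by rw [h]))
      have hdvd : q ∣ p ^ m - p ^ c :=
        (Nat.modEq_iff_dvd' (Nat.pow_le_pow_right hp.pos hcm)).1 hmod.symm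
      have hfac : p ^ m - p ^ c = p ^ c * (p ^ (m - c) - 1) := by
        rw [Nat.mul_sub, ← pow_add, mul_one]; congr 2; omega
      rw [hfac] at hdvd
      rcases hq.dvd_mul.1 hdvd with h | h
      · exact hqp ((Nat.prime_dvd_prime_iff_eq hq hp).1 (hq.dvd_of_dvd_pow h))
      · have h2 : q ∣ ∏ i ∈ Finset.Icc 1 n, (p ^ i - 1) :=
          h.trans (Finset.dvd_prod_of_mem (fun i => p ^ i - 1)
            (Finset.mem_Icc.2 ⟨by omega, by omega⟩))
        exact hq.one_lt.ne' (Nat.eq_one_of_dvd_coprimes hcop hqG h2)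
    intro y hy
    rw [Subgroup.mem_centralizer_iff]
    intro x hx
    have hxC : (⟨x, hx⟩ : U) ∈ C := by rw [hCtop]; trivial
    exact ((Subgroup.mem_centralizer_iff.1 hxC) y hy).symm
  have hKcent : K ≤ Subgroup.centralizer (U : Set G) := by
    rw [← Subgroup.relIndex_eq_one]
    by_contra hne
    obtain ⟨q, hq, hqd⟩ := Nat.exists_prime_and_dvd hne
    have hnorm : (Subgroup.centralizer (U : Set G)).Normal := inferInstance
    have hqK : q ∣ Nat.card K := hqd.trans (Subgroup.relIndex_dvd_card _ _)
    have hqp : q ≠ p := by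
      rintro rfl
      rw [hKc] at hqK
      exact hq.one_lt.ne' (Nat.eq_one_of_dvd_coprimes hUi hqK dvd_rfl)
    have : Fact q.Prime := ⟨hq⟩
    obtain ⟨Q⟩ : Nonempty (Sylow q G) := inferInstance
    have h1 : q ∣ (Subgroup.centralizer (U : Set G)).index :=
      hqd.trans (Subgroup.relIndex_dvd_index_of_normal _ _)
    exact Q.not_dvd_index (h1.trans (Subgroup.index_dvd_of_le (hcent q hq hqp Q)))
  refine ⟨K, ⟨?_⟩, by rw [hKc]; exact hUi, m, by rw [hKi, hm]⟩
  intro x hx g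
  obtain ⟨⟨a, b⟩, rfl⟩ := hK.2 g
  have hx2 : (b : G) * x * (b : G)⁻¹ ∈ K := mul_mem (mul_mem b.2 hx) (inv_mem b.2)
  have hcm := (Subgroup.mem_centralizer_iff.1 (hKcent hx2)) a a.2
  have : (a : G) * b * x * ((a : G) * b)⁻¹ = (b : G) * x * (b : G)⁻¹ := by
    calc (a : G) * b * x * ((a : G) * b)⁻¹ = (a * (b * x * (b : G)⁻¹)) * (a : G)⁻¹ := by group
      _ = _ := by rw [hcm]; group
  simp only
  rw [this]; exact hx2

theorem pn_small {p n : ℕ} [Fact p.Prime] : ∀ (d : ℕ) (G : Type u) [Group G] [Finite G],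
    Nat.card G = d → Nat.Coprime (Nat.card G) (∏ i ∈ Finset.Icc 1 n, (p ^ i - 1)) →
    ¬ p ^ (n + 1) ∣ Nat.card G → IsPNilpotent p G := by
  have hp : p.Prime := Fact.out
  intro d
  induction d using Nat.strong_induction_on with
  | _ d ih =>
  intro G _ _ hd hcop hsm
  have hsub : ∀ M : Subgroup G, M ≠ ⊤ → IsPNilpotent p M := by
    intro M hM
    refine ih _ ?_ M rfl (Nat.Coprime.coprime_dvd_left M.card_subgroup_dvd_card hcop)
      (fun h => hsm (h.trans M.card_subgroup_dvd_card))
    rw [← hd]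
    refine lt_of_le_of_ne M.card_le_card_group ?_
    exact fun h => hM (Subgroup.eq_top_of_card_eq _ h)
  by_cases hex : ∃ U : Subgroup G, U.Normal ∧ IsPGroup p U ∧ U ≠ ⊥
  · obtain ⟨U, hU, hUp, hUb⟩ := hex
    have hdv : Nat.card (G ⧸ U) ∣ Nat.card G := U.card_quotient_dvd_card
    have hq : IsPNilpotent p (G ⧸ U) := by
      refine ih _ ?_ (G ⧸ U) rfl (Nat.Coprime.coprime_dvd_left hdv hcop)
        (fun h => hsm (h.trans hdv))
      rw [← hd, ← U.card_mul_index, Subgroup.index_eq_card]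
      have h1 : 1 < Nat.card U := (Subgroup.one_lt_card_iff_ne_bot U).2 hUb
      have h2 : 0 < Nat.card (G ⧸ U) := Nat.card_pos
      nlinarith
    obtain ⟨L, hL, hLc, k, hk⟩ := hq
    have hsurj : Function.Surjective (QuotientGroup.mk' U) := QuotientGroup.mk'_surjective U
    have hi : (L.comap (QuotientGroup.mk' U)).index = p ^ k := by
      rw [Subgroup.index_comap_of_surjective _ hsurj, hk]
    by_cases hLt : L = ⊤
    · refine pn_normal_sylow hcop hsm U hU hUp ?_
      rw [hLt, Subgroup.card_top] at hLc
      exact hLc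
    · refine pn_of_normal (hL.comap _) hi (hsub _ ?_)
      intro h
      apply hLt
      rw [← Subgroup.index_eq_one, hk, ← hi, h, Subgroup.index_top]
  · push Not at hex
    by_cases hpG : p ∣ Nat.card G
    · obtain ⟨P⟩ : Nonempty (Sylow p G) := inferInstance
      have hPb : (P : Subgroup G) ≠ ⊥ := P.ne_bot_of_dvd_card hpG
      obtain ⟨M, hM, hMt, k, hk⟩ := exists_normal_of_fusion (p := p) (G := G) (by
        intro U hU hUb
        apply hsub
        intro h
        exact hUb (hex U (Subgroup.normalizer_eq_top_iff.1 h) hU)) P hPb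
      exact pn_of_normal hM hk (hsub M hMt)
    · refine ⟨⊤, inferInstance, ?_, 0, by simp⟩
      rw [Subgroup.card_top]
      exact ((Nat.Prime.coprime_iff_not_dvd hp).2 hpG).symm

theorem transfer_mul_hom {G : Type*} [Group G] [Finite G] {H : Subgroup G} {A : Type*} [CommGroup A]
    (φ ψ : H →* A) :
    MonoidHom.transfer (φ * ψ) = MonoidHom.transfer φ * MonoidHom.transfer ψ := by
  ext g
  let T : H.LeftTransversal := default
  rw [MonoidHom.mul_apply, MonoidHom.transfer_def _ T, MonoidHom.transfer_def _ T,
    MonoidHom.transfer_def _ T]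
  exact Finset.prod_mul_distrib

theorem transfer_compl {G : Type*} [Group G] [Finite G] {P K : Subgroup G} {A : Type*}
    [CommGroup A] (φ : P →* A) (hK : K.IsComplement' P) (t : G) (ht : t ∈ P)
    (hn : ∀ k ∈ K, t⁻¹ * k * t ∈ K) :
    MonoidHom.transfer φ t = φ ⟨t, ht⟩ ^ P.index := by
  let T : P.LeftTransversal := ⟨(K : Set G), hK⟩
  rw [MonoidHom.transfer_def φ T]
  let _ := P.fintypeQuotientOfFiniteIndex
  have key : ∀ q : G ⧸ P, ((T.2.leftQuotientEquiv q : G))⁻¹ *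
      ((t • T).2.leftQuotientEquiv q : G) = t := by
    intro q
    rw [Subgroup.smul_apply_eq_smul_apply_inv_smul]
    obtain ⟨k, rfl⟩ := T.2.leftQuotientEquiv.symm.surjective q
    have hk : (k : G) ∈ K := k.2
    have h1 : T.2.leftQuotientEquiv.symm k = ((k : G) : G ⧸ P) := rfl
    have h2 : t⁻¹ • T.2.leftQuotientEquiv.symm k =
        T.2.leftQuotientEquiv.symm ⟨t⁻¹ * k * t, hn k hk⟩ := by
      rw [h1]
      change (((t⁻¹ * k : G)) : G ⧸ P) = ((t⁻¹ * k * t : G) : G ⧸ P)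
      rw [QuotientGroup.eq]
      simpa [mul_assoc] using ht
    rw [h2, Equiv.apply_symm_apply, Equiv.apply_symm_apply]
    simp [mul_assoc]
  have : Subgroup.leftTransversals.diff φ T (t • T) = ∏ q : G ⧸ P, φ ⟨t, ht⟩ := by
    apply Finset.prod_congr rfl
    intro q _
    congr 1
    exact Subtype.ext (key q)
  rw [this, Finset.prod_const, Finset.card_univ, Subgroup.index_eq_card, Nat.card_eq_fintype_card]

/-- Gaschuetz-type lifting through a central kernel. -/
theorem lift_central {G B D : Type*} [Group G] [Finite G] [Group B] [Finite B] [Group D]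
    (P : Subgroup G) (π : B →* D) (hπ : Function.Surjective π) (μ : G →* D) (ρ : P →* B)
    (hρ : ∀ x : P, π (ρ x) = μ x) (hcen : ∀ c ∈ π.ker, ∀ b, c * b = b * c)
    (hcop : Nat.Coprime P.index (Nat.card B)) (hB : 1 < Nat.card B) :
    ∃ θ : G →* B, ∀ g, π (θ g) = μ g := by
  let E : Subgroup (G × B) :=
    MonoidHom.eqLocus (μ.comp (MonoidHom.fst G B)) (π.comp (MonoidHom.snd G B))
  have hE : ∀ e : E, μ e.1.1 = π e.1.2 := fun e => e.2
  let f : E →* G := (MonoidHom.fst G B).comp E.subtype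
  have hf : Function.Surjective f := by
    intro g
    obtain ⟨b, hb⟩ := hπ (μ g)
    exact ⟨⟨(g, b), hb.symm⟩, rfl⟩
  let S : Subgroup E := P.comap f
  have hSi : S.index = P.index := Subgroup.index_comap_of_surjective _ hf
  let C := π.ker
  let _ : CommGroup C := { (inferInstance : Group C) with
    mul_comm := fun a b => Subtype.ext (hcen a a.2 b) }
  let ψ : S →* C :=
    { toFun := fun s => ⟨s.1.1.2 * (ρ ⟨s.1.1.1, s.2⟩)⁻¹, by
        rw [MonoidHom.mem_ker, map_mul, map_inv, hρ, ← hE s.1, hE s.1, mul_inv_cancel]⟩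
      map_one' := by
        apply Subtype.ext
        change (1 : B) * (ρ 1)⁻¹ = 1
        simp
      map_mul' := by
        intro s t
        apply Subtype.ext
        change (s.1.1.2 * t.1.1.2) * (ρ (⟨s.1.1.1, s.2⟩ * ⟨t.1.1.1, t.2⟩))⁻¹ =
          (s.1.1.2 * (ρ ⟨s.1.1.1, s.2⟩)⁻¹) * (t.1.1.2 * (ρ ⟨t.1.1.1, t.2⟩)⁻¹)
        have hk : t.1.1.2 * (ρ ⟨t.1.1.1, t.2⟩)⁻¹ ∈ π.ker := by
          rw [MonoidHom.mem_ker, map_mul, map_inv, hρ, ← hE t.1, hE t.1, mul_inv_cancel]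
        have h1 := hcen _ hk (ρ ⟨s.1.1.1, s.2⟩)⁻¹
        rw [map_mul, mul_inv_rev, mul_assoc (s.1.1.2) (ρ ⟨s.1.1.1, s.2⟩)⁻¹, ← h1]
        simp only [mul_assoc] }
  have hψ1 : ∀ s : S, s.1.1.1 = 1 → ((ψ s : C) : B) = s.1.1.2 := by
    intro s hs
    have e2 : ∀ (x : G) (hx : x ∈ P), x = 1 → ρ ⟨x, hx⟩ = 1 := by
      rintro x hx rfl
      exact map_one ρ
    have e3 : ρ ⟨s.1.1.1, s.2⟩ = 1 := e2 _ _ hs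
    change s.1.1.2 * (ρ ⟨s.1.1.1, s.2⟩)⁻¹ = s.1.1.2
    rw [e3, inv_one, mul_one]
  let τ : E →* C := MonoidHom.transfer ψ
  obtain ⟨m, -, hm⟩ := Nat.exists_mul_mod_eq_one_of_coprime hcop hB
  let θ' : E →* B :=
    { toFun := fun e => e.1.2 * ((τ e ^ m : C) : B)⁻¹
      map_one' := by simp
      map_mul' := by
        intro a b
        rw [map_mul, mul_pow]
        change a.1.2 * b.1.2 * (((τ a ^ m : C) : B) * ((τ b ^ m : C) : B))⁻¹ = _
        have h1 := hcen _ (inv_mem (τ a ^ m : C).2) b.1.2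
        have h2 := hcen _ (inv_mem (τ a ^ m : C).2) (((τ b ^ m : C) : B))⁻¹
        rw [mul_inv_rev, ← h2, mul_assoc, ← mul_assoc (b.1.2), ← h1]
        simp only [mul_assoc] }
  have hker : f.ker ≤ θ'.ker := by
    rintro ⟨⟨g, c⟩, he⟩ hg
    have hg1 : g = 1 := hg
    subst hg1
    have hc : c ∈ π.ker := by
      rw [MonoidHom.mem_ker]
      have : μ 1 = π c := he
      rw [← this, map_one]
    rw [MonoidHom.mem_ker]
    have key : ∀ (k : ℕ) (g₀ : E), g₀⁻¹ * (⟨(1, c), he⟩ : E) ^ k * g₀ = (⟨(1, c), he⟩ : E) ^ k := by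
      intro k g₀
      have hcm : Commute (⟨(1, c), he⟩ : E) g₀ := by
        apply Subtype.ext
        apply Prod.ext
        · change 1 * g₀.1.1 = g₀.1.1 * 1
          simp
        · exact hcen c hc _
      rw [mul_assoc, (hcm.pow_left k).eq, inv_mul_cancel_left]
    have ht : τ ⟨(1, c), he⟩ = _ := MonoidHom.transfer_eq_pow ψ _ (fun k g₀ _ => key k g₀)
    have ht2 : ((τ ⟨(1, c), he⟩ : C) : B) = c ^ P.index := by
      rw [ht, ← hSi]
      rw [hψ1 _ (by simp)]
      simp
    change c * ((τ ⟨(1, c), he⟩ ^ m : C) : B)⁻¹ = 1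
    have h3 : ((τ ⟨(1, c), he⟩ ^ m : C) : B) = c := by
      have : ((τ ⟨(1, c), he⟩ ^ m : C) : B) = ((τ ⟨(1, c), he⟩ : C) : B) ^ m := rfl
      rw [this, ht2, ← pow_mul, ← pow_mod_natCard, hm, pow_one]
    rw [h3, mul_inv_cancel]
  refine ⟨f.liftOfSurjective hf ⟨θ', hker⟩, ?_⟩
  intro g
  obtain ⟨e, rfl⟩ := hf g
  have h1 : f.liftOfSurjective hf ⟨θ', hker⟩ (f e) = θ' e :=
    f.liftOfRightInverse_comp_apply _ _ ⟨θ', hker⟩ e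
  rw [h1]
  change π (e.1.2 * ((τ e ^ m : C) : B)⁻¹) = μ e.1.1
  have h2 : π ((τ e ^ m : C) : B) = 1 := (τ e ^ m : C).2
  rw [map_mul, map_inv, h2, inv_one, mul_one, hE e]

theorem ext_hom {G : Type*} [Group G] [Finite G] {p : ℕ} [Fact p.Prime] (P : Subgroup G)
    (hP : IsPGroup p P) (hPi : ¬ p ∣ P.index)
    (hsup : ∀ H : Subgroup G, H ≤ P → Nat.card H * p = Nat.card P → HasPNilpotentSupplement p H)
    (φ : P →* Multiplicative (ZMod p)) :
    ∃ Φ : G →* Multiplicative (ZMod p), ∀ x : P, Φ x = φ x := by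
  have hp : p.Prime := Fact.out
  have hcardA : Nat.card (Multiplicative (ZMod p)) = p := by simp
  let e : (P →* Multiplicative (ZMod p)) →* (P →* Multiplicative (ZMod p)) :=
    MonoidHom.mk' (fun l => (MonoidHom.transfer l).comp P.subtype) (by
      intro a b
      rw [transfer_mul_hom]
      rfl)
  have hinj : Function.Injective e := by
    rw [injective_iff_map_eq_one]
    intro l hl
    by_contra hne
    obtain ⟨x, hx⟩ : ∃ x, l x ≠ 1 := by
      by_contra hcon
      push Not at hcon
      exact hne (MonoidHom.ext hcon)
    have hcr : Nat.card l.range = p := by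
      have h1 : Nat.card l.range ∣ p := by
        have := l.range.card_subgroup_dvd_card
        rwa [hcardA] at this
      rcases (Nat.dvd_prime hp).1 h1 with h | h
      · exfalso
        rw [Subgroup.card_eq_one, MonoidHom.range_eq_bot_iff] at h
        exact hne h
      · exact h
    have hHc : Nat.card (l.ker.map P.subtype) * p = Nat.card P := by
      rw [Subgroup.card_subtype, ← l.ker.card_mul_index, Subgroup.index_ker, hcr]
    obtain ⟨T, ⟨K, hK, hKc, k, hk⟩, hT⟩ := hsup _ (Subgroup.map_subtype_le _) hHc
    have hTi : ∃ j, T.index = p ^ j := by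
      have horb := hP.card_orbit (α := G ⧸ T) ((1 : G) : G ⧸ T)
      have huniv : MulAction.orbit P ((1 : G) : G ⧸ T) = Set.univ := by
        rw [Set.eq_univ_iff_forall]
        intro q
        obtain ⟨g, rfl⟩ := QuotientGroup.mk_surjective q
        have hg : g ∈ ((l.ker.map P.subtype : Subgroup G) : Set G) * (T : Set G) := by
          rw [hT]; trivial
        obtain ⟨h, hh, t, ht, rfl⟩ := hg
        refine ⟨⟨h, Subgroup.map_subtype_le _ hh⟩, ?_⟩
        change ((h * 1 : G) : G ⧸ T) = ((h * t : G) : G ⧸ T)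
        rw [QuotientGroup.eq]
        simpa using ht
      rw [huniv] at horb
      obtain ⟨j, hj⟩ := horb
      refine ⟨j, ?_⟩
      rw [Subgroup.index_eq_card, ← hj]
      exact (Nat.card_congr (Equiv.Set.univ _)).symm
    obtain ⟨j, hj⟩ := hTi
    have hK'c : Nat.Coprime (Nat.card (K.map T.subtype)) p := by
      rw [Subgroup.card_subtype]; exact hKc
    have hK'i : (K.map T.subtype).index = p ^ (k + j) := by
      rw [Subgroup.index_map_subtype, hk, hj, pow_add]
    have hcompl := pn_sylow_card hK'c hK'i hP hPi
    have hxG : (x : G) ∈ ((l.ker.map P.subtype : Subgroup G) : Set G) * (T : Set G) := by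
      rw [hT]; trivial
    obtain ⟨h, ⟨h', hh', rfl⟩, t, ht, hht⟩ := hxG
    have htP : t = ((h'⁻¹ * x : P) : G) := by
      change t = (h' : G)⁻¹ * x
      rw [← hht]
      simp
    have htmem : t ∈ P := by rw [htP]; exact (h'⁻¹ * x : P).2
    have hlt : l ⟨t, htmem⟩ = l x := by
      have : (⟨t, htmem⟩ : P) = h'⁻¹ * x := Subtype.ext htP
      rw [this, map_mul, map_inv, (show l h' = 1 from hh')]
      simp
    have htr := transfer_compl l hcompl t htmem (by
      rintro _ ⟨y, hy, rfl⟩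
      refine ⟨⟨t, ht⟩⁻¹ * y * ⟨t, ht⟩, ?_, rfl⟩
      have := hK.conj_mem y hy ⟨t, ht⟩⁻¹
      simpa using this)
    have hone : MonoidHom.transfer l t = 1 := by
      have := DFunLike.congr_fun hl ⟨t, htmem⟩
      exact this
    rw [hone, hlt] at htr
    apply hx
    rw [← orderOf_eq_one_iff]
    have h1 : orderOf (l x) ∣ p := by
      have := orderOf_dvd_natCard (l x)
      rwa [hcardA] at this
    have h2 : orderOf (l x) ∣ P.index := orderOf_dvd_of_pow_eq_one htr.symm
    exact Nat.eq_one_of_dvd_coprimes ((Nat.Prime.coprime_iff_not_dvd hp).2 hPi) h1 h2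
  have hfin : Finite (P →* Multiplicative (ZMod p)) :=
    Finite.of_injective (fun f => (f : P → Multiplicative (ZMod p))) DFunLike.coe_injective
  obtain ⟨l, hl⟩ := Finite.surjective_of_injective hinj φ
  exact ⟨MonoidHom.transfer l, fun x => DFunLike.congr_fun hl x⟩

theorem commutator_top_ne {P : Type*} [Group P] [Group.IsNilpotent P] (Q : Subgroup P)
    (hQ : Q ≠ ⊥) : ⁅Q, (⊤ : Subgroup P)⁆ ≠ Q := by
  intro h
  apply hQ
  obtain ⟨n, hn⟩ := Subgroup.nilpotent_iff_lowerCentralSeries.1 (inferInstance : Group.IsNilpotent P)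
  rw [eq_bot_iff, ← hn]
  have : ∀ m, Q ≤ (⊤ : Subgroup P).lowerCentralSeries m := by
    intro m
    induction m with
    | zero => simp
    | succ m ih =>
      rw [Subgroup.lowerCentralSeries_succ]
      calc Q = ⁅Q, (⊤ : Subgroup P)⁆ := h.symm
        _ ≤ _ := Subgroup.commutator_mono ih le_rfl
  exact this n

open scoped commutatorElement in
/-- A form of Tate's theorem. -/
theorem tate {G : Type*} [Group G] [Finite G] {p : ℕ} [Fact p.Prime] (P : Subgroup G)
    (hP : IsPGroup p P) (hPi : ¬ p ∣ P.index)
    (hext : ∀ φ : P →* Multiplicative (ZMod p),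
      ∃ Φ : G →* Multiplicative (ZMod p), ∀ x : P, Φ x = φ x) : IsPNilpotent p G := by
  have hp : p.Prime := Fact.out
  obtain ⟨N, ⟨hN, k, hk⟩, hNmin⟩ := Set.Finite.exists_minimalFor
    (fun N : Subgroup G => Nat.card N) {N : Subgroup G | N.Normal ∧ ∃ k, N.index = p ^ k}
    (Set.toFinite _) ⟨⊤, inferInstance, 0, by simp⟩
  have hmin : ∀ M : Subgroup G, M.Normal → (∃ j, M.index = p ^ j) → N ≤ M := by
    rintro M hM ⟨j, hj⟩
    have h1 : (N ⊓ M).index ∣ p ^ (k + j) := by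
      rw [← Subgroup.relIndex_mul_index (inf_le_right : N ⊓ M ≤ M), Subgroup.inf_relIndex_right,
        pow_add, hj, ← hk]
      exact Nat.mul_dvd_mul_right (Subgroup.relIndex_dvd_index_of_normal _ _) _
    obtain ⟨i, -, hi⟩ := (Nat.dvd_prime_pow hp).1 h1
    have h2 : Nat.card (N ⊓ M : Subgroup G) ≤ Nat.card N :=
      Subgroup.card_le_of_le inf_le_left
    have h3 := hNmin (j := N ⊓ M) ⟨inferInstance, i, hi⟩ h2
    have h4 : N ⊓ M = N := Subgroup.eq_of_le_of_card_ge inf_le_left h3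
    exact inf_eq_left.1 h4
  let π : P →* G ⧸ N := (QuotientGroup.mk' N).comp P.subtype
  have hπ : Function.Surjective π := by
    have hsup : N ⊔ P = ⊤ := by
      rw [← Subgroup.index_eq_one]
      have h1 : (N ⊔ P).index ∣ p ^ k := hk ▸ Subgroup.index_dvd_of_le le_sup_left
      have h2 : (N ⊔ P).index ∣ P.index := Subgroup.index_dvd_of_le le_sup_right
      exact Nat.eq_one_of_dvd_coprimes
        (Nat.Coprime.pow_left k ((Nat.Prime.coprime_iff_not_dvd hp).2 hPi)) h1 h2
    intro q
    obtain ⟨g, rfl⟩ := QuotientGroup.mk_surjective q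
    have hg : g ∈ N ⊔ P := by rw [hsup]; trivial
    obtain ⟨n, hn, x, hx, rfl⟩ := Subgroup.mem_sup_of_normal_left.1 hg
    refine ⟨⟨x, hx⟩, ?_⟩
    change ((x : G) : G ⧸ N) = ((n * x : G) : G ⧸ N)
    rw [QuotientGroup.mk_mul, (QuotientGroup.eq_one_iff n).2 hn, one_mul]
  set Q : Subgroup P := π.ker with hQ
  have hQi : Q.index = N.index := by
    rw [hQ, Subgroup.index_ker, MonoidHom.range_eq_top.2 hπ, Subgroup.card_top,
      Subgroup.index_eq_card]
  by_cases hQb : Q = ⊥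
  · refine ⟨N, hN, ?_, k, hk⟩
    have h1 : Nat.card N * N.index = P.index * N.index := by
      rw [N.card_mul_index, ← P.index_mul_card, ← hQi, hQb, Subgroup.index_bot]
    have h2 : Nat.card N = P.index :=
      Nat.eq_of_mul_eq_mul_right (by rw [hk]; exact pow_pos hp.pos k) h1
    rw [h2]
    exact ((Nat.Prime.coprime_iff_not_dvd hp).2 hPi).symm
  exfalso
  have hnil : Group.IsNilpotent P := hP.isNilpotent
  set R : Subgroup P := ⁅Q, (⊤ : Subgroup P)⁆ with hR
  have hRn : R.Normal := Subgroup.commutator_normal _ _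
  have hRQ : R ≤ Q := Subgroup.commutator_le_left _ _
  have hRne : R ≠ Q := commutator_top_ne Q hQb
  let π' : P ⧸ R →* G ⧸ N := QuotientGroup.lift R π (fun x hx => hRQ hx)
  have hπ' : ∀ x : P, π' (x : P ⧸ R) = ((x : G) : G ⧸ N) := fun x => rfl
  have hpPR : IsPGroup p (P ⧸ R) := hP.to_quotient R
  obtain ⟨r, hr⟩ := IsPGroup.iff_card.1 hpPR
  obtain ⟨θ, hθ⟩ := lift_central P π' (by
      intro q
      obtain ⟨x, rfl⟩ := hπ q
      exact ⟨x, rfl⟩) (QuotientGroup.mk' N) (QuotientGroup.mk' R) (fun x => rfl) (by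
      intro c hc b
      obtain ⟨q, rfl⟩ := QuotientGroup.mk_surjective c
      obtain ⟨y, rfl⟩ := QuotientGroup.mk_surjective b
      have hq : q ∈ Q := hc
      have hcm : ⁅q⁻¹, y⁻¹⁆ ∈ R :=
        Subgroup.commutator_mem_commutator (inv_mem hq) (Subgroup.mem_top _)
      rw [← QuotientGroup.mk_mul, ← QuotientGroup.mk_mul, eq_comm, QuotientGroup.eq]
      rw [commutatorElement_def] at hcm
      simpa [mul_assoc] using hcm) (by
      rw [hr]
      exact Nat.Coprime.pow_right r ((Nat.Prime.coprime_iff_not_dvd hp).2 hPi).symm) (by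
      have h1 : 1 < R.index := by
        rw [Nat.one_lt_iff_ne_zero_and_ne_one]
        refine ⟨Subgroup.index_ne_zero_of_finite, ?_⟩
        intro h
        rw [Subgroup.index_eq_one] at h
        apply hRne
        rw [h] at hRQ ⊢
        exact (top_le_iff.1 hRQ).symm
      exact h1)
  have hθtop : θ.range = ⊤ := by
    by_contra hne
    set Y : Subgroup P := θ.range.comap (QuotientGroup.mk' R) with hY
    have hYne : Y ≠ ⊤ := by
      intro h
      apply hne
      rw [eq_top_iff]
      intro z _
      obtain ⟨x, rfl⟩ := QuotientGroup.mk_surjective z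
      have : x ∈ Y := by rw [h]; trivial
      exact this
    obtain ⟨m, hm⟩ := IsPGroup.iff_card.1 hP
    obtain ⟨j, hj⟩ := IsPGroup.iff_card.1 (hP.to_subgroup Y)
    have hjm : j < m := by
      have h1 := Y.card_le_card_group
      rw [hj, hm] at h1
      have h2 := (Nat.pow_le_pow_iff_right hp.one_lt).1 h1
      refine lt_of_le_of_ne h2 ?_
      rintro rfl
      exact hYne (Subgroup.eq_top_of_card_eq _ (hj.trans hm.symm))
    obtain ⟨M, hMc, hYM⟩ := Sylow.exists_subgroup_card_pow_prime_le p (m := m - 1)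
      (by rw [hm]; exact pow_dvd_pow p (by omega)) Y hj (by omega)
    have hMi : M.index = p := by
      have h1 := M.card_mul_index
      have h2 : p ^ m = p ^ (m - 1) * p := by rw [← pow_succ]; congr 1; omega
      rw [hMc, hm, h2] at h1
      exact Nat.eq_of_mul_eq_mul_left (pow_pos hp.pos _) h1
    have hMn : M.Normal := by
      apply Subgroup.normal_of_index_eq_minFac_card
      rw [hMi, hm, Nat.Prime.pow_minFac hp (by omega)]
    have hcardA : Nat.card (Multiplicative (ZMod p)) = p := by simp
    let eqv : P ⧸ M ≃* Multiplicative (ZMod p) := mulEquivOfPrimeCardEq hMi hcardA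
    let φ : P →* Multiplicative (ZMod p) := eqv.toMonoidHom.comp (QuotientGroup.mk' M)
    have hφ : ∀ x, φ x = 1 → x ∈ M := by
      intro x hx
      have h1 : eqv (x : P ⧸ M) = 1 := hx
      rw [map_eq_one_iff eqv eqv.injective] at h1
      exact (QuotientGroup.eq_one_iff x).1 h1
    obtain ⟨Φ, hΦ⟩ := hext φ
    have hNΦ : N ≤ Φ.ker := by
      apply hmin _ inferInstance
      rw [Subgroup.index_ker]
      have : Nat.card Φ.range ∣ p ^ 1 := by
        have := Φ.range.card_subgroup_dvd_card
        rw [hcardA] at this; rw [pow_one]; exact this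
      obtain ⟨i, -, hi⟩ := (Nat.dvd_prime_pow hp).1 this
      exact ⟨i, hi⟩
    have hQM : Q ≤ M := by
      intro x hx
      apply hφ
      rw [← hΦ]
      apply hNΦ
      have h1 : ((x : G) : G ⧸ N) = 1 := hx
      exact (QuotientGroup.eq_one_iff _).1 h1
    have hMtop : M = ⊤ := by
      rw [eq_top_iff]
      intro x _
      obtain ⟨y, hy⟩ := QuotientGroup.mk_surjective (θ (x : G))
      have hyM : y ∈ M := hYM ⟨x, hy.symm⟩
      have hyx : y⁻¹ * x ∈ Q := by
        have h1 := hθ (x : G)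
        rw [← hy] at h1
        have h2 : π y = π x := h1
        rw [hQ, MonoidHom.mem_ker, map_mul, map_inv, h2, inv_mul_cancel]
      have := mul_mem hyM (hQM hyx)
      simpa using this
    rw [hMtop, Subgroup.index_top] at hMi
    exact hp.one_lt.ne hMi
  have hle : N ≤ θ.ker := by
    apply hmin _ inferInstance
    exact ⟨r, by rw [Subgroup.index_ker, hθtop, Subgroup.card_top, hr]⟩
  have h1 := Subgroup.index_dvd_of_le hle
  rw [Subgroup.index_ker, hθtop, Subgroup.card_top, ← Subgroup.index_eq_card, ← hQi] at h1
  have h2 := Subgroup.index_dvd_of_le hRQ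
  have h3 := Nat.dvd_antisymm h1 h2
  apply hRne
  apply Subgroup.eq_of_le_of_card_ge hRQ
  have h4 := R.card_mul_index
  rw [← Q.card_mul_index, h3] at h4
  exact (Nat.eq_of_mul_eq_mul_right
    (Nat.pos_of_ne_zero Subgroup.index_ne_zero_of_finite) h4).ge

theorem isMaximalIn_of_card {G : Type*} [Group G] [Finite G] {p : ℕ} (hp : p.Prime)
    {H P : Subgroup G} (h : H ≤ P) (hc : Nat.card H * p = Nat.card P) : IsMaximalIn H P := by
  have hpos : 0 < Nat.card H := Nat.card_pos
  refine ⟨lt_of_le_of_ne h ?_, ?_⟩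
  · rintro rfl
    have := hp.one_lt
    nlinarith
  · intro L hHL hLP
    obtain ⟨a, ha⟩ := Subgroup.card_dvd_of_le hHL.le
    obtain ⟨b, hb⟩ := Subgroup.card_dvd_of_le hLP
    rw [← hc, ha, mul_assoc] at hb
    have h1 : p = a * b := Nat.eq_of_mul_eq_mul_left hpos hb
    rcases (Nat.dvd_prime hp).1 (Dvd.intro b h1.symm) with h2 | h2
    · exfalso
      apply hHL.ne
      apply Subgroup.eq_of_le_of_card_ge hHL.le
      rw [ha, h2, mul_one]
    · apply Subgroup.eq_of_le_of_card_ge hLP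
      rw [← hc, ha, h2]

theorem isNMaximalIn_succ {G : Type*} [Group G] {k : ℕ} {H' H P : Subgroup G}
    (h : IsMaximalIn H P) (h' : IsNMaximalIn k H' H) : IsNMaximalIn (k + 1) H' P := by
  obtain ⟨c, hc0, hcl, hc⟩ := h'
  refine ⟨Fin.cons P c, rfl, ?_, ?_⟩
  · rw [← Fin.succ_last, Fin.cons_succ, hcl]
  · intro i
    refine Fin.cases ?_ (fun i => ?_) i
    · simp only [Fin.castSucc_zero, Fin.cons_zero, Fin.cons_succ, hc0]
      exact h
    · rw [Fin.cons_succ, Fin.castSucc_succ, Fin.cons_succ]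
      exact hc i

theorem exists_isNMaximalIn {G : Type*} [Group G] [Finite G] {p : ℕ} [Fact p.Prime] :
    ∀ (k : ℕ) (m : ℕ) (H : Subgroup G), Nat.card H = p ^ m → k ≤ m →
      ∃ H' ≤ H, IsNMaximalIn k H' H := by
  have hp : p.Prime := Fact.out
  intro k
  induction k with
  | zero =>
    intro m H _ _
    exact ⟨H, le_rfl, fun _ => H, rfl, rfl, fun i => i.elim0⟩
  | succ k ih =>
    intro m H hH hkm
    obtain ⟨L, hL⟩ := Sylow.exists_subgroup_card_pow_prime (G := H) p (n := m - 1)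
      (by rw [hH]; exact pow_dvd_pow p (by omega))
    have hLc : Nat.card (L.map H.subtype) = p ^ (m - 1) := by rw [Subgroup.card_subtype, hL]
    obtain ⟨H', hH', hm'⟩ := ih (m - 1) (L.map H.subtype) hLc (by omega)
    refine ⟨H', hH'.trans (Subgroup.map_subtype_le _), isNMaximalIn_succ ?_ hm'⟩
    apply isMaximalIn_of_card hp (Subgroup.map_subtype_le _)
    rw [hLc, hH, ← pow_succ]
    congr 1
    omega


/-- If `gcd(|G|, (p-1)(p²-1)⋯(pⁿ-1)) = 1` for some `n ≥ 1`, `P` is a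
Sylow `p`-subgroup of `G` and every `n`-maximal subgroup of `P` has a `p`-nilpotent
supplement in `G`, then `G` is `p`-nilpotent. -/
theorem stmt_4 {G : Type*} [Group G] [Finite G] (p n : ℕ) (hp : p.Prime)
    (hpdvd : p ∣ Nat.card G) (hn : 1 ≤ n)
    (hcop : Nat.Coprime (Nat.card G) (∏ i ∈ Finset.Icc 1 n, (p ^ i - 1)))
    (P : Subgroup G) (hP : IsSylowIn p P ⊤)
    (hsup : ∀ H : Subgroup G, IsNMaximalIn n H P → HasPNilpotentSupplement p H) :
    IsPNilpotent p G := by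
  have hpf : Fact p.Prime := ⟨hp⟩
  obtain ⟨-, hPp, hPi⟩ := hP
  rw [← Subgroup.relIndex, Subgroup.relIndex_top_right] at hPi
  obtain ⟨m, hm⟩ := IsPGroup.iff_card.1 hPp
  by_cases hnm : n ≤ m
  · apply tate P hPp hPi
    apply ext_hom P hPp hPi
    intro H hH hHc
    have hm1 : 1 ≤ m := hn.trans hnm
    have hHc' : Nat.card H = p ^ (m - 1) := by
      have h2 : p ^ m = p ^ (m - 1) * p := by rw [← pow_succ]; congr 1; omega
      rw [hm, h2] at hHc
      exact Nat.eq_of_mul_eq_mul_right hp.pos hHc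
    obtain ⟨H', hH', hmax⟩ := exists_isNMaximalIn (n - 1) (m - 1) H hHc' (by omega)
    have hmax' := isNMaximalIn_succ (isMaximalIn_of_card hp hH hHc) hmax
    rw [Nat.sub_add_cancel hn] at hmax'
    obtain ⟨T, hT, hTu⟩ := hsup H' hmax'
    refine ⟨T, hT, ?_⟩
    rw [Set.eq_univ_iff_forall] at hTu ⊢
    intro g
    obtain ⟨a, ha, b, hb, hab⟩ := hTu g
    exact ⟨a, hH' ha, b, hb, hab⟩
  · refine pn_small (n := n) _ G rfl hcop ?_
    intro hdvd
    rw [← P.card_mul_index, hm] at hdvd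
    have h1 : p ^ (n + 1) ∣ p ^ m := by
      apply Nat.Coprime.dvd_of_dvd_mul_right _ hdvd
      exact Nat.Coprime.pow_left _ ((Nat.Prime.coprime_iff_not_dvd hp).2 hPi)
    have := (Nat.pow_dvd_pow_iff_le_right hp.one_lt).1 h1
    omega
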